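/- arXiv:2012.08738 — 2 statements merged into one kernel-verified Lean document; each statement's English description precedes it below -/
import Mathlib

section
/- Let V be a finite set and f : 2^V → ℝ a set function. Then f is submodular (i.e. f(Y∪{v}) − f(Y) ≤ f(X∪{v}) − f(X) for all X ⊆ Y ⊆ V and v ∈ V∖Y) if and only if for all disjoint subsets X, L ⊆ V one has f(X∪L) − f(X) ≤ Σ_{v∈L} (f(X∪{v}) − f(X)). (Equivalently: f is submodular if and only if its submodularity ratio γ_{i,j} is at least 1 for all parameters i, j.) -/
/-!
Adding the elements of `L` to `X` one at a time writes `f (X ∪ L) - f X` as a telescoping sum of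
marginal gains over sets between `X` and `X ∪ L`; diminishing returns bounds each of them by the
gain over `X`. Conversely, the inequality for the two-element set `L = {a, v}` says that adding `a`
to `X` does not increase the gain of `v`, and a superset `Y` of `X` is reached by adding its
remaining elements one at a time.
-/

section Submodular

variable {V α : Type*} [DecidableEq V]

/-- The marginal gain `f (X ∪ {v}) - f X` of adding the element `v` to the set `X`, also
for `v ∈ X`, where it is `f X - f X`. -/
def marginalGain [Sub α] (f : Finset V → α) (X : Finset V) (v : V) : α :=
  f (insert v X) - f X

/-- Submodularity, in its diminishing returns form, of a function of the finite subsets of `V`. -/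
def IsSubmodular [Sub α] [LE α] (f : Finset V → α) : Prop :=
  ∀ X Y : Finset V, X ⊆ Y → ∀ v ∉ Y, marginalGain f Y v ≤ marginalGain f X v

theorem marginalGain_of_mem [AddGroup α] (f : Finset V → α) {X : Finset V} {v : V} (hv : v ∈ X) :
    marginalGain f X v = 0 := by
  rw [marginalGain, Finset.insert_eq_of_mem hv, sub_self]

theorem isSubmodular_of_marginalGain_insert_le [Sub α] [Preorder α] {f : Finset V → α}
    (h : ∀ X : Finset V, ∀ a ∉ X, ∀ v ∉ insert a X,
      marginalGain f (insert a X) v ≤ marginalGain f X v) :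
    IsSubmodular f := by
  intro X Y hXY v hvY
  -- Erasing `v` extends the gain of `v` to an antitone function on all finite sets.
  have gain_antitone : Antitone fun S : Finset V ↦ marginalGain f (S.erase v) v := by
    refine Finset.antitone_iff_forall_insert_le.2 fun S a haS ↦ ?_
    obtain rfl | hav := eq_or_ne a v
    · simp only [Finset.erase_insert_eq_erase, le_refl]
    · simp only [Finset.erase_insert_of_ne hav]
      exact h (S.erase v) a (by simp [haS]) v (by simp [hav.symm])
  simpa only [Finset.erase_eq_of_notMem hvY, Finset.erase_eq_of_notMem fun hvX ↦ hvY (hXY hvX)]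
    using gain_antitone hXY

variable [AddCommGroup α] [Preorder α] [IsOrderedAddMonoid α] {f : Finset V → α}

theorem IsSubmodular.union_sub_le_sum_marginalGain (hf : IsSubmodular f) (X L : Finset V) :
    f (X ∪ L) - f X ≤ ∑ v ∈ L, marginalGain f X v := by
  induction L using Finset.induction_on with
  | empty => simp
  | insert a S haS ih =>
    have gain_le : marginalGain f (X ∪ S) a ≤ marginalGain f X a := by
      by_cases haX : a ∈ X
      · rw [marginalGain_of_mem f haX, marginalGain_of_mem f (Finset.mem_union_left S haX)]
      · exact hf X (X ∪ S) Finset.subset_union_left a (by simp [haX, haS])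
    calc f (X ∪ insert a S) - f X
        = marginalGain f (X ∪ S) a + (f (X ∪ S) - f X) := by
          rw [Finset.union_insert, marginalGain, sub_add_sub_cancel]
      _ ≤ marginalGain f X a + ∑ v ∈ S, marginalGain f X v := add_le_add gain_le ih
      _ = ∑ v ∈ insert a S, marginalGain f X v := (Finset.sum_insert haS).symm

theorem marginalGain_insert_le_of_insert_insert_sub_le {X : Finset V} {a v : V}
    (h : f (insert v (insert a X)) - f X ≤ marginalGain f X a + marginalGain f X v) :
    marginalGain f (insert a X) v ≤ marginalGain f X v :=
  calc marginalGain f (insert a X) v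
      = f (insert v (insert a X)) - f X - marginalGain f X a := by
        rw [marginalGain, marginalGain, sub_sub_sub_cancel_right]
    _ ≤ marginalGain f X v := sub_le_iff_le_add'.2 h

theorem submodular_iff_sum_marginals_general (f : Finset V → α) :
    IsSubmodular f ↔ ∀ X L : Finset V, Disjoint X L →
      f (X ∪ L) - f X ≤ ∑ v ∈ L, marginalGain f X v := by
  refine ⟨fun hf X L _ ↦ hf.union_sub_le_sum_marginalGain X L, fun h ↦ ?_⟩
  refine isSubmodular_of_marginalGain_insert_le fun X a haX v hv ↦ ?_
  obtain ⟨hva, hvX⟩ : v ≠ a ∧ v ∉ X := by simpa using hv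
  have union_pair : X ∪ {v, a} = insert v (insert a X) := by
    rw [Finset.union_insert, Finset.union_singleton]
  have pair_le := h X {v, a} (by simp [haX, hvX])
  rw [union_pair, Finset.sum_pair hva, add_comm] at pair_le
  exact marginalGain_insert_le_of_insert_insert_sub_le pair_le

end Submodular

/-- A set function `f` is submodular iff for all disjoint `X, L ⊆ V` one has
`f (X ∪ L) - f X ≤ ∑_{v ∈ L} (f (X ∪ {v}) - f X)` (i.e. the submodularity ratio is
at least 1 for all parameters). -/
theorem submodular_iff_sum_marginals {V : Type*} [Fintype V] [DecidableEq V]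
    (f : Finset V → ℝ) :
    (∀ X Y : Finset V, X ⊆ Y → ∀ v ∉ Y, f (insert v Y) - f Y ≤ f (insert v X) - f X)
    ↔ ∀ X L : Finset V, Disjoint X L →
        f (X ∪ L) - f X ≤ ∑ v ∈ L, (f (insert v X) - f X) :=
  submodular_iff_sum_marginals_general f
end

section
/- Let V be a finite set, f : 2^V → ℝ a monotone function with f(S) ≥ 0 for all S, and let a partition matroid constraint be given by a partition B₁,…,B_k of V and thresholds d₁,…,d_k, with d = Σ_i d_i and d̄ = min_i d_i. Let OPT be a feasible set maximizing f among all feasible sets. Let X ⊆ V with |X| = j < d̄, and let γ with 0 ≤ γ ≤ 1 be a submodularity-ratio lower bound for f with parameters (j+1, d). Then there exists v ∈ V∖X such that X∪{v} is feasible and f(X∪{v}) − f(X) ≥ (γ/d)·(f(OPT) − f(X)). -/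
/-!
Fewer than `d̄` elements cannot violate any threshold after one insertion, so every element outside
`X` is a feasible candidate. The submodularity ratio at `X`, applied to `L = OPT \ X`, bounds the
sum of the at most `d` marginal gains over `L` below by `γ (f (X ∪ L) - f X)`, which by monotonicity
is at least `γ (f OPT - f X)`; some element of `L` does at least as well as the average. If `L` is
empty, then `f OPT ≤ f X` and any element outside `X` works.
-/

section SubmodularityRatio

variable {V R : Type*} [DecidableEq V] [Field R] [LinearOrder R]

/-- `γ` is a submodularity-ratio lower bound for `f` with parameters `(m, n)`: for sets `S` of fewer
than `m` elements and disjoint sets `L` of at most `n` elements, the marginal gains over `S` of the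
elements of `L` add up to at least `γ` times the gain of `L` as a whole. -/
def IsSubmodularityRatioBound (f : Finset V → R) (γ : R) (m n : ℕ) : Prop :=
  ∀ S L : Finset V, Disjoint S L → S.card < m → L.card ≤ n →
    γ * (f (S ∪ L) - f S) ≤ ∑ v ∈ L, (f (insert v S) - f S)

namespace IsSubmodularityRatioBound

variable [IsStrictOrderedRing R] {f : Finset V → R} {γ : R} {m n : ℕ} {S : Finset V}

theorem exists_mem_div_card_mul_le_gain (hγ : IsSubmodularityRatioBound f γ m n)
    {L : Finset V} (hL : L.Nonempty) (hSL : Disjoint S L) (hS : S.card < m) (hLn : L.card ≤ n) :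
    ∃ v ∈ L, γ / L.card * (f (S ∪ L) - f S) ≤ f (insert v S) - f S := by
  have hcard : (L.card : R) ≠ 0 := Nat.cast_ne_zero.2 hL.card_ne_zero
  refine Finset.exists_le_of_sum_le hL ?_
  calc ∑ _v ∈ L, γ / L.card * (f (S ∪ L) - f S)
      = γ * (f (S ∪ L) - f S) := by
        rw [Finset.sum_const, nsmul_eq_mul, ← mul_assoc, mul_div_cancel₀ _ hcard]
    _ ≤ ∑ v ∈ L, (f (insert v S) - f S) := hγ S L hSL hS hLn

theorem exists_notMem_div_mul_le_gain (hγ : IsSubmodularityRatioBound f γ m n) (hγ0 : 0 ≤ γ)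
    (hf : Monotone f) (hS : S.card < m) (hne : ∃ v, v ∉ S) {T : Finset V} (hT : T.card ≤ n) :
    ∃ v ∉ S, γ / n * (f T - f S) ≤ f (insert v S) - f S := by
  rcases (T \ S).eq_empty_or_nonempty with hempty | hnonempty
  · obtain ⟨v, hv⟩ := hne
    have hTS : f T ≤ f S := hf (Finset.sdiff_eq_empty_iff_subset.1 hempty)
    have hgain : f S ≤ f (insert v S) := hf (Finset.subset_insert v S)
    refine ⟨v, hv, le_trans ?_ (sub_nonneg.2 hgain)⟩
    exact mul_nonpos_of_nonneg_of_nonpos (by positivity) (sub_nonpos.2 hTS)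
  · have hcard : (T \ S).card ≤ n := (Finset.card_le_card Finset.sdiff_subset).trans hT
    obtain ⟨v, hv, hgain⟩ :=
      hγ.exists_mem_div_card_mul_le_gain hnonempty Finset.disjoint_sdiff hS hcard
    have hT_le : f T ≤ f (S ∪ T \ S) := hf (by simp)
    have hunion_nonneg : 0 ≤ f (S ∪ T \ S) - f S := sub_nonneg.2 (hf Finset.subset_union_left)
    have hpos : (0 : R) < (T \ S).card := Nat.cast_pos.2 hnonempty.card_pos
    refine ⟨v, (Finset.mem_sdiff.1 hv).2, ?_⟩
    calc γ / n * (f T - f S)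
        ≤ γ / n * (f (S ∪ T \ S) - f S) := by gcongr
      _ ≤ γ / (T \ S).card * (f (S ∪ T \ S) - f S) :=
        mul_le_mul_of_nonneg_right
          (div_le_div_of_nonneg_left hγ0 hpos (Nat.cast_le.2 hcard)) hunion_nonneg
      _ ≤ f (insert v S) - f S := hgain

end IsSubmodularityRatioBound

end SubmodularityRatio

section PartitionConstraint

variable {V ι : Type*} [DecidableEq V] {B : ι → Finset V} {D : ι → ℕ} {S : Finset V}

/-- `S` satisfies the partition matroid constraint with blocks `B i` and thresholds `D i`. The
blocks are an arbitrary family: neither disjointness nor covering is part of the definition. -/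
def IsPartitionFeasible (B : ι → Finset V) (D : ι → ℕ) (S : Finset V) : Prop :=
  ∀ i, (S ∩ B i).card ≤ D i

namespace IsPartitionFeasible

theorem of_forall_card_le (h : ∀ i, S.card ≤ D i) : IsPartitionFeasible B D S :=
  fun i => (Finset.card_le_card Finset.inter_subset_left).trans (h i)

theorem insert_of_forall_card_lt (h : ∀ i, S.card < D i) (v : V) :
    IsPartitionFeasible B D (insert v S) :=
  of_forall_card_le fun i => (Finset.card_insert_le v S).trans (h i)

theorem card_le_sum [Fintype ι] (hS : IsPartitionFeasible B D S) (hB : ∀ v, ∃ i, v ∈ B i) :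
    S.card ≤ ∑ i, D i := by
  have hcover : S ⊆ Finset.univ.biUnion fun i => S ∩ B i := fun v hv => by
    simpa [hv] using hB v
  calc S.card ≤ (Finset.univ.biUnion fun i => S ∩ B i).card := Finset.card_le_card hcover
    _ ≤ ∑ i, (S ∩ B i).card := Finset.card_biUnion_le
    _ ≤ ∑ i, D i := Finset.sum_le_sum fun i _ => hS i

end IsPartitionFeasible

end PartitionConstraint

theorem greedy_progress_monotone_general {V ι R : Type*} [DecidableEq V] [Fintype ι] [Nonempty ι]
    [Field R] [LinearOrder R] [IsStrictOrderedRing R]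
    {B : ι → Finset V} (hB : ∀ v, ∃ i, v ∈ B i) {D : ι → ℕ} (hD : ∀ i, D i ≤ (B i).card)
    {f : Finset V → R} (hf : Monotone f) {T : Finset V} (hT : IsPartitionFeasible B D T)
    {X : Finset V} (hX : ∀ i, X.card < D i) {γ : R} (hγ0 : 0 ≤ γ)
    (hγ : IsSubmodularityRatioBound f γ (X.card + 1) (∑ i, D i)) :
    ∃ v ∉ X, IsPartitionFeasible B D (insert v X) ∧
      γ / (∑ i, D i : R) * (f T - f X) ≤ f (insert v X) - f X := by
  obtain ⟨i⟩ := ‹Nonempty ι›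
  obtain ⟨u, -, hu⟩ : ∃ u ∈ B i, u ∉ X :=
    Finset.exists_mem_notMem_of_card_lt_card ((hX i).trans_le (hD i))
  obtain ⟨v, hv, hgain⟩ := hγ.exists_notMem_div_mul_le_gain hγ0 hf X.card.lt_succ_self ⟨u, hu⟩
    (hT.card_le_sum hB)
  exact ⟨v, hv, .insert_of_forall_card_lt hX v, by simpa only [Nat.cast_sum] using hgain⟩

/-- Greedy progress for monotone `f` under a partition matroid constraint: if
`|X| = j < d̄` and `γ ∈ [0,1]` is a submodularity-ratio lower bound for `f` with
parameters `(j+1, d)`, then some feasible single-element addition gains at least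
`(γ/d)(f OPT - f X)`. -/
theorem greedy_progress_monotone {V : Type*} [Fintype V] [DecidableEq V] {k : ℕ}
    (hk : 0 < k)
    (B : Fin k → Finset V) (hpart : ∀ v : V, ∃! i, v ∈ B i)
    (hBne : ∀ i, (B i).Nonempty)
    (D : Fin k → ℕ) (hD : ∀ i, 1 ≤ D i ∧ D i ≤ (B i).card)
    (dbar : ℕ)
    (hdbar : dbar = Finset.univ.inf' ⟨⟨0, hk⟩, Finset.mem_univ _⟩ D)
    (f : Finset V → ℝ) (hf0 : ∀ S, 0 ≤ f S)
    (hmono : ∀ X Y : Finset V, X ⊆ Y → f X ≤ f Y)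
    (OPT : Finset V) (hOPTfeas : ∀ i, (OPT ∩ B i).card ≤ D i)
    (hOPTmax : ∀ S : Finset V, (∀ i, (S ∩ B i).card ≤ D i) → f S ≤ f OPT)
    (X : Finset V) (j : ℕ) (hXcard : X.card = j) (hj : j < dbar)
    (γ : ℝ) (hγ0 : 0 ≤ γ) (hγ1 : γ ≤ 1)
    (hγ : ∀ S L : Finset V, Disjoint S L → S.card < j + 1 → L.card ≤ ∑ i, D i →
      γ * (f (S ∪ L) - f S) ≤ ∑ v ∈ L, (f (insert v S) - f S)) :
    ∃ v ∉ X, (∀ i, ((insert v X) ∩ B i).card ≤ D i) ∧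
      f (insert v X) - f X ≥ (γ / (∑ i, D i : ℝ)) * (f OPT - f X) := by
  subst hXcard hdbar
  have : Nonempty (Fin k) := ⟨⟨0, hk⟩⟩
  exact greedy_progress_monotone_general (fun v => (hpart v).exists) (fun i => (hD i).2)
    (fun S T h => hmono S T h) hOPTfeas
    (fun i => (Finset.lt_inf'_iff _).1 hj i (Finset.mem_univ i)) hγ0 hγ
end
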